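/- arXiv:1511.01128 — 2 statements merged into one kernel-verified Lean document; each statement's English description precedes it below -/
import Mathlib

section
/- Let (R_0, R_1, ..., R_ℓ, R_{ℓ+1}=0) be the subresultant PRS of A and B (not necessarily normal). Then for every i with 2 ≤ i ≤ ℓ, the element gcd(lc(A), lc(B)) of D divides the content cont(R_i). -/
open Polynomial

/-!
The proof is the fundamental theorem of subresultants, up to sign: with `j = deg R_{i-1} - 1`, the
term `R_i` equals `± S_j(A, B)`, where `S_j` is the `j`-th polynomial subresultant, a determinant
whose rows are built from the shifts `X ^ k * A` and `X ^ k * B`. In the column of the highest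
coefficient index the only nonzero entries are `lc A` and `lc B`, so every common divisor of these
two divides `S_j(A, B)`.

To identify `R_i`, eliminate the rows of `R_{k-1}` in `S_j(R_{k-1}, R_k)` by means of the
pseudo-division that defines `R_{k+1}`; this leaves an explicit scalar times `S_j(R_k, R_{k+1})`.
The `β_k` and `ψ_k` are chosen so that these scalars telescope, and at `k = i - 1` the determinant
`S_j(R_{i-1}, R_i)` has size one with entry `R_i`. Comparing squares removes all signs.
-/

section Determinant

variable {R m n : Type*} [CommRing R] [Fintype m] [DecidableEq m] [Fintype n] [DecidableEq n]

lemma sq_det_reindex (e e' : m ≃ n) (M : Matrix m m R) :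
    (M.reindex e e').det ^ 2 = M.det ^ 2 := by
  rw [Matrix.det_reindex, mul_pow, ← Int.cast_pow, Int.isUnit_sq (Units.isUnit _), Int.cast_one,
    one_mul]

lemma dvd_det_of_forall_dvd_column {g : R} (M : Matrix n n R) (c : n) (h : ∀ r, g ∣ M r c) :
    g ∣ M.det := by
  rw [Matrix.det_apply']
  exact Finset.dvd_sum fun σ _ =>
    ((h (σ c)).trans (Finset.dvd_prod_of_mem (fun i => M (σ i) i) (Finset.mem_univ c))).mul_left _

end Determinant

section PolynomialCoefficients

variable {R : Type*} [CommSemiring R]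

lemma dvd_coeff_of_natDegree_le {g : R} {P : R[X]} (hg : g ∣ P.leadingCoeff) {n : ℕ}
    (hn : P.natDegree ≤ n) : g ∣ P.coeff n := by
  rcases hn.eq_or_lt with rfl | hlt
  · exact hg
  · simp [coeff_eq_zero_of_natDegree_lt hlt]

lemma map_mul_eq_sum_coeff_smul {M : Type*} [AddCommMonoid M] [Module R M] (T : R[X] →ₗ[R] M)
    (f Q : R[X]) {t : ℕ} (hf : f.natDegree < t) :
    T (f * Q) = ∑ l : Fin t, f.coeff l • T (X ^ (l : ℕ) * Q) := by
  conv_lhs => rw [f.as_sum_range_C_mul_X_pow' hf]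
  simp only [Finset.sum_range, Finset.sum_mul, ← smul_eq_C_mul, smul_mul_assoc, map_sum, map_smul]

lemma natDegree_quotient_add_natDegree_le {R : Type*} [CommRing R] [NoZeroDivisors R]
    {P Q S q : R[X]} {α β : R} (hQ : Q ≠ 0) (hQP : Q.natDegree ≤ P.natDegree)
    (hSQ : S.natDegree ≤ Q.natDegree) (h : α • P = q * Q + β • S) :
    q.natDegree + Q.natDegree ≤ P.natDegree := by
  rcases eq_or_ne q 0 with rfl | hq
  · simpa using hQP
  rw [← natDegree_mul hq hQ, eq_sub_of_add_eq h.symm]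
  exact (natDegree_sub_le _ _).trans (max_le (natDegree_smul_le α P)
    ((natDegree_smul_le β S).trans (hSQ.trans hQP)))

end PolynomialCoefficients

section SubresultantMatrix

variable {R : Type*} [CommRing R]

/-- The functional giving column `c` of a subresultant matrix: column `0` holds the row polynomials
themselves, column `c > 0` their coefficients of index `j + c` as constants. -/
noncomputable def subresultantColumn (j c : ℕ) : R[X] →ₗ[R] R[X] :=
  if c = 0 then LinearMap.id else monomial 0 ∘ₗ lcoeff R (j + c)

lemma subresultantColumn_zero (j : ℕ) (f : R[X]) : subresultantColumn j 0 f = f := by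
  simp [subresultantColumn]

lemma subresultantColumn_of_pos (j : ℕ) {c : ℕ} (hc : 0 < c) (f : R[X]) :
    subresultantColumn j c f = C (f.coeff (j + c)) := by
  simp [subresultantColumn, hc.ne']

lemma subresultantColumn_X_pow_mul (j : ℕ) {c k : ℕ} (hc : 0 < c) (hk : k ≤ j + c) (f : R[X]) :
    subresultantColumn j c (X ^ k * f) = C (f.coeff (j + c - k)) := by
  rw [subresultantColumn_of_pos j hc, coeff_X_pow_mul', if_pos hk]

lemma subresultantColumn_X_pow_mul_eq_zero (j : ℕ) {c k : ℕ} {f : R[X]} (hc : 0 < c)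
    (hk : f.natDegree + k < j + c) : subresultantColumn j c (X ^ k * f) = 0 := by
  rw [subresultantColumn_X_pow_mul j hc (by omega), coeff_eq_zero_of_natDegree_lt (by omega),
    map_zero]

lemma map_subresultantColumn {S : Type*} [CommRing S] (φ : R →+* S) (j c : ℕ) (f : R[X]) :
    (subresultantColumn j c f).map φ = subresultantColumn j c (f.map φ) := by
  rcases c.eq_zero_or_pos with rfl | hc
  · simp only [subresultantColumn_zero]
  · simp only [subresultantColumn_of_pos j hc, map_C, coeff_map]

/-- The rows `X ^ k * P` for `k < p`, followed by `X ^ k * Q` for `k < q`, of a subresultant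
matrix. -/
noncomputable def shiftedRow (p q : ℕ) (P Q : R[X]) : Fin p ⊕ Fin q → R[X] :=
  Sum.elim (fun k => X ^ (k : ℕ) * P) (fun k => X ^ (k : ℕ) * Q)

/-- The square matrix of size `p + q` whose determinant is the `j`-th polynomial subresultant of
`P` and `Q` when `p = deg Q - j` and `q = deg P - j`. Columns are listed by increasing coefficient
index, the reverse of the usual order. -/
noncomputable def subresultantMatrix (j p q : ℕ) (P Q : R[X]) :
    Matrix (Fin p ⊕ Fin q) (Fin p ⊕ Fin q) R[X] :=
  .of fun a b => subresultantColumn j (finSumFinEquiv b : ℕ) (shiftedRow p q P Q a)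

lemma sq_det_subresultantMatrix_comm (j p q : ℕ) (P Q : R[X]) :
    (subresultantMatrix j p q P Q).det ^ 2 = (subresultantMatrix j q p Q P).det ^ 2 := by
  let e' : Fin p ⊕ Fin q ≃ Fin q ⊕ Fin p :=
    finSumFinEquiv.trans ((finCongr (add_comm p q)).trans finSumFinEquiv.symm)
  rw [← sq_det_reindex (Equiv.sumComm _ _) e']
  congr 2
  ext1 a b
  rcases a with a | a <;> simp [subresultantMatrix, shiftedRow, e']

/-- Row reduction: the multiples of the rows of `Q` prescribed by the quotient `q` turn the rows of
`α • P` into those of `β • S`. -/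
lemma C_pow_mul_det_subresultantMatrix (j : ℕ) {P Q S q : R[X]} {α β : R} {p t : ℕ}
    (hq : q.natDegree + p ≤ t) (h : α • P = q * Q + β • S) :
    C α ^ p * (subresultantMatrix j p t P Q).det =
      C β ^ p * (subresultantMatrix j p t S Q).det := by
  let U : Matrix (Fin p) (Fin t) R[X] := .of fun k l => C ((X ^ (k : ℕ) * q).coeff l)
  have row_eq (k : Fin p) (c : ℕ) : C α * subresultantColumn j c (X ^ (k : ℕ) * P) =
      (∑ l, U k l * subresultantColumn j c (X ^ (l : ℕ) * Q)) +
        C β * subresultantColumn j c (X ^ (k : ℕ) * S) := by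
    have hdeg : (X ^ (k : ℕ) * q).natDegree < t := by
      have := natDegree_mul_le_of_le (natDegree_X_pow_le (R := R) k) le_rfl (q := q)
      omega
    have hshift : α • (X ^ (k : ℕ) * P) = X ^ (k : ℕ) * q * Q + β • (X ^ (k : ℕ) * S) := by
      rw [← mul_smul_comm, h, mul_add, mul_assoc, mul_smul_comm]
    simp only [U, Matrix.of_apply, ← smul_eq_C_mul]
    rw [← map_smul, hshift, map_add, map_mul_eq_sum_coeff_smul _ _ _ hdeg, map_smul]
  have hM : Matrix.fromBlocks (.diagonal fun _ => C α) (-U) 0 1 * subresultantMatrix j p t P Q =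
      Matrix.fromBlocks (.diagonal fun _ => C β) 0 0 1 * subresultantMatrix j p t S Q := by
    ext1 a b
    rw [Matrix.mul_apply, Matrix.mul_apply, Fintype.sum_sum_type, Fintype.sum_sum_type]
    rcases a with a | a
    · simp [subresultantMatrix, shiftedRow, Matrix.diagonal_apply, row_eq]
    · simp [subresultantMatrix, shiftedRow, Matrix.one_apply]
  simpa using congrArg Matrix.det hM

lemma det_shifted_coeff (Q : R[X]) (m s : ℕ) :
    (Matrix.of fun k l : Fin s =>
      C ((X ^ (m + k : ℕ) * Q).coeff (Q.natDegree + (m + l)))).det = C Q.leadingCoeff ^ s := by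
  rw [Matrix.det_of_isLowerTriangular]
  · simp [coeff_X_pow_mul']
  · intro k l (hkl : k < l)
    rw [Matrix.of_apply, coeff_X_pow_mul', if_pos (by omega), coeff_eq_zero_of_natDegree_lt,
      map_zero]
    omega

/-- The top `s` rows of `Q` and the last `s` columns form a triangular block. -/
lemma det_subresultantMatrix_add (j : ℕ) {S Q : R[X]} {p q : ℕ} (s : ℕ) (hp : 0 < p)
    (hQ : Q.natDegree = j + p) (hS : S.natDegree ≤ j + q) :
    (subresultantMatrix j p (q + s) S Q).det =
      (subresultantMatrix j p q S Q).det * C Q.leadingCoeff ^ s := by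
  let e : (Fin p ⊕ Fin q) ⊕ Fin s ≃ Fin p ⊕ Fin (q + s) :=
    (Equiv.sumAssoc _ _ _).trans (Equiv.sumCongr (Equiv.refl _) finSumFinEquiv)
  have hS_zero (k : Fin p) (l : Fin s) :
      subresultantColumn j (p + (q + l)) (X ^ (k : ℕ) * S) = 0 :=
    subresultantColumn_X_pow_mul_eq_zero j (by omega) (by omega)
  have hQ_zero (k : Fin q) (l : Fin s) :
      subresultantColumn j (p + (q + l)) (X ^ (k : ℕ) * Q) = 0 :=
    subresultantColumn_X_pow_mul_eq_zero j (by omega) (by omega)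
  have hQ_corner (k l : Fin s) : subresultantColumn j (p + (q + l)) (X ^ (q + k : ℕ) * Q) =
      C ((X ^ (q + k : ℕ) * Q).coeff (Q.natDegree + (q + l))) := by
    rw [subresultantColumn_of_pos j (by omega), hQ, add_assoc]
  have hM : (subresultantMatrix j p (q + s) S Q).submatrix e e =
      Matrix.fromBlocks (subresultantMatrix j p q S Q) 0
        (.of fun (k : Fin s) b => subresultantColumn j (finSumFinEquiv b : ℕ) (X ^ (q + k : ℕ) * Q))
        (.of fun k l : Fin s => C ((X ^ (q + k : ℕ) * Q).coeff (Q.natDegree + (q + l)))) := by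
    ext1 a b
    rcases a with (a | a) | a <;> rcases b with (b | b) | b <;>
      simp [subresultantMatrix, shiftedRow, e, hS_zero, hQ_zero, hQ_corner]
  rw [← Matrix.det_submatrix_equiv_self e, hM, Matrix.det_fromBlocks_zero₁₂, det_shifted_coeff]

lemma det_subresultantMatrix_zero_one (j : ℕ) (P Q : R[X]) :
    (subresultantMatrix j 0 1 P Q).det = Q := by
  have : Subsingleton (Fin 0 ⊕ Fin 1) := (Equiv.emptySum (Fin 0) (Fin 1)).subsingleton
  rw [Matrix.det_eq_elem_of_subsingleton _ (Sum.inr 0)]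
  simp [subresultantMatrix, shiftedRow, subresultantColumn_zero]

end SubresultantMatrix

section Subresultant

variable {R : Type*} [CommRing R]

/-- The `j`-th polynomial subresultant `S_j(P, Q)`, up to sign. If `j ≥ deg P`, truncated
subtraction leaves no rows for `Q`, and vice versa. -/
noncomputable def subresultant (j : ℕ) (P Q : R[X]) : R[X] :=
  (subresultantMatrix j (Q.natDegree - j) (P.natDegree - j) P Q).det

lemma subresultant_eq_right {j : ℕ} {P Q : R[X]} (hP : P.natDegree = j + 1)
    (hQ : Q.natDegree ≤ j) : subresultant j P Q = Q := by
  rw [subresultant, Nat.sub_eq_zero_of_le hQ, hP, Nat.add_sub_cancel_left,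
    det_subresultantMatrix_zero_one]

lemma map_subresultant {S : Type*} [CommRing S] {φ : R →+* S} (hφ : Function.Injective φ) (j : ℕ)
    (P Q : R[X]) : (subresultant j P Q).map φ = subresultant j (P.map φ) (Q.map φ) := by
  rw [subresultant, subresultant, natDegree_map_eq_of_injective hφ,
    natDegree_map_eq_of_injective hφ, ← coe_mapRingHom, RingHom.map_det]
  congr 1
  ext1 a b
  rcases a with a | a <;>
    simp [subresultantMatrix, shiftedRow, map_subresultantColumn]

lemma C_dvd_subresultant {j : ℕ} {P Q : R[X]} {g : R} (hgP : g ∣ P.leadingCoeff)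
    (hgQ : g ∣ Q.leadingCoeff) (hjP : j < P.natDegree) (hjQ : j < Q.natDegree) :
    C g ∣ subresultant j P Q := by
  refine dvd_det_of_forall_dvd_column _ (Sum.inr ⟨P.natDegree - j - 1, by omega⟩) fun r => ?_
  rcases r with r | r <;>
    simp only [subresultantMatrix, shiftedRow, Matrix.of_apply, Sum.elim_inl, Sum.elim_inr,
      finSumFinEquiv_apply_right, Fin.val_natAdd] <;>
    rw [subresultantColumn_X_pow_mul j (by omega) (by omega)]
  · exact map_dvd C (dvd_coeff_of_natDegree_le hgP (by omega))
  · exact map_dvd C (dvd_coeff_of_natDegree_le hgQ (by omega))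

lemma sq_C_mul_subresultant_of_pseudoDivision [NoZeroDivisors R] {j : ℕ} {P Q S q : R[X]}
    {α β : R}
    (hj : j < Q.natDegree) (hQP : Q.natDegree ≤ P.natDegree) (hSQ : S.natDegree ≤ Q.natDegree)
    (h : α • P = q * Q + β • S) :
    (C (α ^ (Q.natDegree - j)) * subresultant j P Q) ^ 2 =
      (C (β ^ (Q.natDegree - j) * Q.leadingCoeff ^ (P.natDegree - j - (S.natDegree - j))) *
        subresultant j Q S) ^ 2 := by
  have hQ : Q ≠ 0 := ne_zero_of_natDegree_gt hj
  have hq := natDegree_quotient_add_natDegree_le hQ hQP hSQ h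
  have reduce := C_pow_mul_det_subresultantMatrix j (p := Q.natDegree - j) (t := P.natDegree - j)
    (by omega) h
  have shrink := det_subresultantMatrix_add j (S := S) (Q := Q) (p := Q.natDegree - j)
    (q := S.natDegree - j) (P.natDegree - j - (S.natDegree - j)) (by omega) (by omega) (by omega)
  rw [show S.natDegree - j + (P.natDegree - j - (S.natDegree - j)) = P.natDegree - j by omega]
    at shrink
  rw [subresultant, C_pow, reduce, shrink, mul_pow, mul_pow, sq_det_subresultantMatrix_comm,
    subresultant, C_mul, C_pow, C_pow]
  ring

end Subresultant

/-- `R 0, …, R ℓ` are the first terms of the subresultant polynomial remainder sequence of `R 0`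
and `R 1`, with quotients `Q`, multipliers `α`, `β` and auxiliary sequence `ψ`, where
`α`, `β`, `ψ` and `Q` are indexed from `1`. The final `R (ℓ + 1)` may be nonzero, so initial
segments of a full sequence are included. -/
structure IsSubresultantPRS {K : Type*} [Field K] (ℓ : ℕ) (R Q : ℕ → K[X]) (α β ψ : ℕ → K) :
    Prop where
  ne_zero : ∀ i ≤ ℓ, R i ≠ 0
  natDegree_one_le : (R 1).natDegree ≤ (R 0).natDegree
  degree_lt : ∀ i < ℓ, (R (i + 2)).degree < (R (i + 1)).degree
  pseudoDivision : ∀ i < ℓ, α (i + 1) • R i = Q (i + 1) * R (i + 1) + β (i + 1) • R (i + 2)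
  alpha_succ : ∀ i < ℓ,
    α (i + 1) = (R (i + 1)).leadingCoeff ^ ((R i).natDegree - (R (i + 1)).natDegree + 1)
  psi_one : ψ 1 = -1
  psi_add_two : ∀ i, i + 2 ≤ ℓ →
    ψ (i + 2) = (-(R (i + 1)).leadingCoeff) ^ ((R i).natDegree - (R (i + 1)).natDegree) /
      ψ (i + 1) ^ ((R i).natDegree - (R (i + 1)).natDegree - 1)
  beta_one : β 1 = (-1) ^ ((R 0).natDegree - (R 1).natDegree + 1)
  beta_add_two : ∀ i, i + 2 ≤ ℓ →
    β (i + 2) = -(R (i + 1)).leadingCoeff *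
      ψ (i + 2) ^ ((R (i + 1)).natDegree - (R (i + 2)).natDegree)

/-- The leading coefficients of a remainder sequence, except that the one of `R 0` is replaced by
`1`; with this convention `β 1` obeys the same formula as the other `β i`. -/
noncomputable def normalizedLead {K : Type*} [Semiring K] (R : ℕ → K[X]) : ℕ → K
  | 0 => 1
  | i + 1 => (R (i + 1)).leadingCoeff

/-- The factor by which `S_j(R k, R (k + 1))` differs, up to sign, from `S_j(R 0, R 1)`. It is used
for `j < deg R k`, where only the first exponent can be truncated. -/
noncomputable def subresultantFactor {K : Type*} [Semiring K] (R : ℕ → K[X]) (ψ : ℕ → K)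
    (j k : ℕ) : K :=
  normalizedLead R k ^ ((R (k + 1)).natDegree - j) * ψ (k + 1) ^ ((R k).natDegree - j - 1)

/-- The scalars of one pseudo-division step telescope; here `p = d_k - j`, `r = d_{k+1} - j` and
`δ = d_{k-1} - d_k`. -/
lemma telescoping_scalars {K : Type*} [CommSemiring K] {a b x y : K} {p r δ : ℕ} (hp : 0 < p)
    (hr : r ≤ p) (hy : y * x ^ δ = b ^ δ * x) :
    (b ^ (δ + 1)) ^ p * (a ^ p * x ^ (δ + p - 1)) =
      (a * x ^ δ) ^ p * b ^ (δ + p - r) * (b ^ r * y ^ (p - 1)) := by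
  obtain ⟨p, rfl⟩ := Nat.exists_eq_add_one.mpr hp
  have hb : b ^ (δ + (p + 1) - r) * b ^ r = b ^ (δ + (p + 1)) := by
    rw [← pow_add]; congr 1; omega
  calc (b ^ (δ + 1)) ^ (p + 1) * (a ^ (p + 1) * x ^ (δ + p))
      = a ^ (p + 1) * x ^ δ * b ^ (δ + (p + 1)) * (b ^ δ * x) ^ p := by ring
    _ = (a * x ^ δ) ^ (p + 1) * b ^ (δ + (p + 1) - r) * (b ^ r * y ^ p) := by
      rw [← hy, ← hb]; ring

namespace IsSubresultantPRS

variable {K : Type*} [Field K] {ℓ : ℕ} {R Q : ℕ → K[X]} {α β ψ : ℕ → K}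

lemma natDegree_lt (h : IsSubresultantPRS ℓ R Q α β ψ) {i : ℕ} (hi : i + 2 ≤ ℓ) :
    (R (i + 2)).natDegree < (R (i + 1)).natDegree :=
  natDegree_lt_natDegree (h.ne_zero _ hi) (h.degree_lt i (by omega))

lemma natDegree_succ_le (h : IsSubresultantPRS ℓ R Q α β ψ) :
    ∀ {i : ℕ}, i < ℓ → (R (i + 1)).natDegree ≤ (R i).natDegree
  | 0, _ => h.natDegree_one_le
  | _ + 1, hi => (h.natDegree_lt hi).le

lemma natDegree_le_natDegree_one (h : IsSubresultantPRS ℓ R Q α β ψ) {i : ℕ} (hi : i < ℓ) :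
    (R (i + 1)).natDegree ≤ (R 1).natDegree := by
  induction i with
  | zero => rfl
  | succ i ih => exact (h.natDegree_succ_le hi).trans (ih (by omega))

lemma normalizedLead_ne_zero (h : IsSubresultantPRS ℓ R Q α β ψ) :
    ∀ {i : ℕ}, i ≤ ℓ → normalizedLead R i ≠ 0
  | 0, _ => one_ne_zero
  | _ + 1, hi => leadingCoeff_ne_zero.mpr (h.ne_zero _ hi)

lemma psi_ne_zero (h : IsSubresultantPRS ℓ R Q α β ψ) {i : ℕ} (hi : i < ℓ) : ψ (i + 1) ≠ 0 := by
  induction i with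
  | zero => simp [h.psi_one]
  | succ i ih =>
    rw [h.psi_add_two i hi]
    exact div_ne_zero (pow_ne_zero _ (neg_ne_zero.mpr (h.normalizedLead_ne_zero hi.le)))
      (pow_ne_zero _ (ih (by omega)))

/-- The extra factor `ψ (i + 1) ^ 2` on both sides makes the recursion hold also for
`deg R 0 = deg R 1`, where the exponent in the denominator of `ψ 2` is truncated to `0`. -/
lemma sq_psi_add_two_mul (h : IsSubresultantPRS ℓ R Q α β ψ) {i : ℕ} (hi : i + 2 ≤ ℓ) :
    ψ (i + 2) ^ 2 * (ψ (i + 1) ^ 2) ^ ((R i).natDegree - (R (i + 1)).natDegree) =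
      ((R (i + 1)).leadingCoeff ^ 2) ^ ((R i).natDegree - (R (i + 1)).natDegree) *
        ψ (i + 1) ^ 2 := by
  have hψ := h.psi_add_two i hi
  rw [eq_div_iff (pow_ne_zero _ (h.psi_ne_zero (by omega)))] at hψ
  cases i with
  | zero =>
    have hψ_sq : ψ 2 ^ 2 = ((R 1).leadingCoeff ^ 2) ^ ((R 0).natDegree - (R 1).natDegree) := by
      rw [← neg_sq (R 1).leadingCoeff, pow_right_comm, ← hψ, h.psi_one, mul_pow, pow_right_comm,
        neg_one_sq, one_pow, mul_one]
    simp [h.psi_one, hψ_sq]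
  | succ i =>
    have hlt := h.natDegree_lt (i := i) (by omega)
    obtain ⟨δ, hδ⟩ : ∃ δ, (R (i + 1)).natDegree - (R (i + 2)).natDegree = δ + 1 :=
      Nat.exists_eq_add_one.mpr (by omega)
    rw [hδ, Nat.add_sub_cancel] at hψ
    rw [hδ, ← neg_sq ((R (i + 2)).leadingCoeff), pow_right_comm (-_), ← hψ]
    ring

lemma beta_succ (h : IsSubresultantPRS ℓ R Q α β ψ) :
    ∀ {i : ℕ}, i < ℓ → β (i + 1) =
      -normalizedLead R i * ψ (i + 1) ^ ((R i).natDegree - (R (i + 1)).natDegree)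
  | 0, _ => by simp [h.beta_one, h.psi_one, normalizedLead, pow_succ]
  | i + 1, hi => h.beta_add_two i hi

lemma beta_ne_zero (h : IsSubresultantPRS ℓ R Q α β ψ) {i : ℕ} (hi : i < ℓ) : β (i + 1) ≠ 0 := by
  rw [h.beta_succ hi]
  exact mul_ne_zero (neg_ne_zero.mpr (h.normalizedLead_ne_zero hi.le))
    (pow_ne_zero _ (h.psi_ne_zero hi))

lemma sq_alpha_pow_mul_subresultantFactor (h : IsSubresultantPRS ℓ R Q α β ψ) {j k : ℕ}
    (hk : k + 2 ≤ ℓ) (hj : j < (R (k + 1)).natDegree) :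
    (α (k + 1) ^ ((R (k + 1)).natDegree - j) * subresultantFactor R ψ j k) ^ 2 =
      (β (k + 1) ^ ((R (k + 1)).natDegree - j) *
        (R (k + 1)).leadingCoeff ^ ((R k).natDegree - j - ((R (k + 2)).natDegree - j)) *
          subresultantFactor R ψ j (k + 1)) ^ 2 := by
  have hle := h.natDegree_succ_le (i := k) (by omega)
  have hlt := h.natDegree_lt hk
  have key := telescoping_scalars (a := normalizedLead R k ^ 2)
    (p := (R (k + 1)).natDegree - j) (r := (R (k + 2)).natDegree - j) (by omega) (by omega)
    (h.sq_psi_add_two_mul hk)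
  rw [show (R k).natDegree - (R (k + 1)).natDegree + ((R (k + 1)).natDegree - j) =
    (R k).natDegree - j by omega] at key
  have hβ_sq : β (k + 1) ^ 2 = normalizedLead R k ^ 2 *
      (ψ (k + 1) ^ 2) ^ ((R k).natDegree - (R (k + 1)).natDegree) := by
    rw [h.beta_succ (by omega), mul_pow, neg_sq, pow_right_comm]
  rw [← hβ_sq] at key
  rw [h.alpha_succ k (by omega), subresultantFactor, subresultantFactor, normalizedLead]
  linear_combination key

/-- The invariant of the remainder sequence. For `k = 0` it is trivial, and for
`j = deg R k - 1` the right-hand side is `R (k + 1) ^ 2`. -/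
theorem sq_subresultantFactor_mul_subresultant (h : IsSubresultantPRS ℓ R Q α β ψ) {j k : ℕ}
    (hk : k < ℓ) (hj : j < (R k).natDegree) :
    (C (subresultantFactor R ψ j k) * subresultant j (R 0) (R 1)) ^ 2 =
      subresultant j (R k) (R (k + 1)) ^ 2 := by
  induction k with
  | zero => simp [subresultantFactor, normalizedLead, h.psi_one, mul_pow, pow_right_comm]
  | succ k ih =>
    have hle := h.natDegree_succ_le (i := k) (by omega)
    have step := sq_C_mul_subresultant_of_pseudoDivision hj hle (h.natDegree_lt hk).le
      (h.pseudoDivision k (by omega))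
    have scalars := congrArg C (h.sq_alpha_pow_mul_subresultantFactor hk hj)
    set a := α (k + 1) ^ ((R (k + 1)).natDegree - j)
    set b := β (k + 1) ^ ((R (k + 1)).natDegree - j) *
      (R (k + 1)).leadingCoeff ^ ((R k).natDegree - j - ((R (k + 2)).natDegree - j))
    have hb_ne : C b ^ 2 ≠ 0 := pow_ne_zero 2 <| C_ne_zero.mpr <|
      mul_ne_zero (pow_ne_zero _ (h.beta_ne_zero (by omega)))
        (pow_ne_zero _ (h.normalizedLead_ne_zero hk.le))
    simp only [C_mul, C_pow, mul_pow] at scalars step ih ⊢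
    apply mul_left_cancel₀ hb_ne
    rw [← step, ← ih (by omega) (by omega), ← mul_assoc, ← scalars, mul_assoc]

theorem eq_subresultant_or_eq_neg (h : IsSubresultantPRS ℓ R Q α β ψ) {i j : ℕ} (hi : i + 2 ≤ ℓ)
    (hj : (R (i + 1)).natDegree = j + 1) :
    R (i + 2) = subresultant j (R 0) (R 1) ∨ R (i + 2) = -subresultant j (R 0) (R 1) := by
  have hle : (R (i + 2)).natDegree ≤ j := Nat.le_of_lt_succ ((h.natDegree_lt hi).trans_eq hj)
  have hfactor : subresultantFactor R ψ j (i + 1) = 1 := by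
    rw [subresultantFactor, hj, Nat.sub_eq_zero_of_le hle, Nat.add_sub_cancel_left, Nat.sub_self,
      pow_zero, pow_zero, one_mul]
  have hsq := h.sq_subresultantFactor_mul_subresultant (k := i + 1) hi
    (j.lt_succ_self.trans_eq hj.symm)
  rw [hfactor, C_1, one_mul, subresultant_eq_right hj hle] at hsq
  exact sq_eq_sq_iff_eq_or_eq_neg.mp hsq.symm

end IsSubresultantPRS

theorem stmt_1_general {D K : Type*} [CommRing D] [Field K] {φ : D →+* K}
    (hφ : Function.Injective φ) {A B : D[X]} {g : D} (hgA : g ∣ A.leadingCoeff)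
    (hgB : g ∣ B.leadingCoeff) {ℓ : ℕ} {R Q : ℕ → K[X]} {α β ψ : ℕ → K}
    (h : IsSubresultantPRS ℓ R Q α β ψ) (hR0 : R 0 = A.map φ) (hR1 : R 1 = B.map φ)
    {i : ℕ} (hi : 2 ≤ i) (hiℓ : i ≤ ℓ) : ∃ P : D[X], R i = (C g * P).map φ := by
  obtain ⟨i, rfl⟩ := Nat.exists_eq_add_of_le' hi
  obtain ⟨j, hj⟩ := Nat.exists_eq_add_one.mpr (Nat.zero_lt_of_lt (h.natDegree_lt hiℓ))
  have hjB : j < (R 1).natDegree := by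
    have := h.natDegree_le_natDegree_one (i := i) (by omega)
    omega
  have hjA : j < (R 0).natDegree := hjB.trans_le h.natDegree_one_le
  rw [hR1, natDegree_map_eq_of_injective hφ] at hjB
  rw [hR0, natDegree_map_eq_of_injective hφ] at hjA
  obtain ⟨P, hP⟩ := C_dvd_subresultant hgA hgB hjA hjB
  have hmap : subresultant j (R 0) (R 1) = (C g * P).map φ := by
    rw [← hP, hR0, hR1, map_subresultant hφ]
  rcases h.eq_subresultant_or_eq_neg hiℓ hj with hS | hS
  · exact ⟨P, hS.trans hmap⟩
  · exact ⟨-P, by rw [hS, hmap, mul_neg, Polynomial.map_neg]⟩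

/-- Let `D` be a UFD with a normalized gcd and fraction field `K`, and let
`A, B ∈ D[x]` be nonzero with `deg A ≥ deg B ≥ 1`.  Let
`(R 0, R 1, …, R ℓ, R (ℓ+1) = 0)` be the subresultant PRS of `A` and `B` (not
necessarily normal; with quotients `Q i`, multipliers `α i`, `β i` given by the
subresultant formulas via the auxiliary sequence `ψ i`, degrees `d i = deg (R i)`, and
all terms lying in `D[x]` as witnessed by `R' i`).  Then for every `i` with
`2 ≤ i ≤ ℓ`, the element `gcd (lc A) (lc B)` of `D` divides `cont (R i)`. -/
theorem stmt_1 {D : Type*} [CommRing D] [IsDomain D] [NormalizedGCDMonoid D]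
    [UniqueFactorizationMonoid D]
    (A B : Polynomial D) (hA : A ≠ 0) (hB : B ≠ 0)
    (hdeg : B.natDegree ≤ A.natDegree) (hB1 : 1 ≤ B.natDegree)
    -- the subresultant PRS `R 0 = A, R 1 = B, …, R ℓ ≠ 0, R (ℓ+1) = 0` of `A` and `B`
    -- over the fraction field `K` of `D`, with quotients `Q i`, scalars `α i, β i`,
    -- degrees `d i`, the auxiliary sequence `ψ i`, and terms `R' i` in `D[x]`
    (ℓ : ℕ) (R Q : ℕ → Polynomial (FractionRing D))
    (α β ψ : ℕ → FractionRing D)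
    (R' : ℕ → Polynomial D) (d : ℕ → ℕ)
    (hR0 : R 0 = A.map (algebraMap D (FractionRing D)))
    (hR1 : R 1 = B.map (algebraMap D (FractionRing D)))
    (hRne : ∀ i, i ≤ ℓ → R i ≠ 0)
    (hRlast : R (ℓ + 1) = 0)
    (hd : ∀ i, d i = (R i).natDegree)
    (hαne : ∀ i, 1 ≤ i → i ≤ ℓ → α i ≠ 0)
    (hβne : ∀ i, 1 ≤ i → i ≤ ℓ → β i ≠ 0)
    (hdesc : ∀ i, 1 ≤ i → i ≤ ℓ → (R (i + 1)).degree < (R i).degree)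
    (hrec : ∀ i, 1 ≤ i → i ≤ ℓ → α i • R (i - 1) = Q i * R i + β i • R (i + 1))
    (hα : ∀ i, 1 ≤ i → i ≤ ℓ → α i = (R i).leadingCoeff ^ (d (i - 1) - d i + 1))
    (hψ1 : ψ 1 = -1)
    (hψ : ∀ i, 2 ≤ i → i ≤ ℓ →
      ψ i = (-(R (i - 1)).leadingCoeff) ^ (d (i - 2) - d (i - 1)) /
        ψ (i - 1) ^ (d (i - 2) - d (i - 1) - 1))
    (hβ1 : β 1 = (-1) ^ (d 0 - d 1 + 1))
    (hβ : ∀ i, 2 ≤ i → i ≤ ℓ →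
      β i = -(R (i - 1)).leadingCoeff * ψ i ^ (d (i - 1) - d i))
    (hR' : ∀ i, i ≤ ℓ + 1 → (R' i).map (algebraMap D (FractionRing D)) = R i)
    :
    ∀ i, 2 ≤ i → i ≤ ℓ →
      gcd A.leadingCoeff B.leadingCoeff ∣ (R' i).content := by
  have hinj := IsFractionRing.injective D (FractionRing D)
  obtain rfl : d = fun i => (R i).natDegree := funext hd
  have hdeg' : (R 1).natDegree ≤ (R 0).natDegree := by
    rwa [hR0, hR1, natDegree_map_eq_of_injective hinj, natDegree_map_eq_of_injective hinj]
  have hPRS : IsSubresultantPRS ℓ R Q α β ψ :=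
    { ne_zero := hRne
      natDegree_one_le := hdeg'
      degree_lt := fun i hi => hdesc (i + 1) i.succ_pos hi
      pseudoDivision := fun i hi => hrec (i + 1) i.succ_pos hi
      alpha_succ := fun i hi => hα (i + 1) i.succ_pos hi
      psi_one := hψ1
      psi_add_two := fun i hi => hψ (i + 2) (Nat.le_add_left 2 i) hi
      beta_one := hβ1
      beta_add_two := fun i hi => hβ (i + 2) (Nat.le_add_left 2 i) hi }
  intro i hi hiℓ
  obtain ⟨P, hP⟩ := stmt_1_general hinj (gcd_dvd_left _ _) (gcd_dvd_right _ _) hPRS hR0 hR1 hi hiℓ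
  exact dvd_content_iff_C_dvd.mpr ⟨P, map_injective _ hinj ((hR' i (by omega)).trans hP)⟩
end

section
/- Let t be the essential part of I at order d_A + d_B (which is defined, since x^{d_B}·A ∈ I has degree d_A + d_B). Then t divides gcd(lc(A), lc(B)) in D. -/
open Polynomial

/-- `IsEssentialPart I n t` says that `t` is the essential part of the ideal `I` of
`D[x]` at order `n`: either `t` is the leading coefficient of some nonzero degree-`n`
element of `I` whose leading coefficient has minimal Euclidean norm (minimal with
respect to the Euclidean "smaller" relation) among all nonzero degree-`n` elements of
`I`, or `I` has no nonzero element of degree `n` and `t = 1`. -/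
def IsEssentialPart {D : Type*} [EuclideanDomain D]
    (I : Ideal (Polynomial D)) (n : ℕ) (t : D) : Prop :=
  (∃ T ∈ I, T ≠ 0 ∧ T.natDegree = n ∧ T.leadingCoeff = t ∧
      ∀ L ∈ I, L ≠ 0 → L.natDegree = n → ¬ EuclideanDomain.r L.leadingCoeff t) ∨
  ((¬ ∃ T ∈ I, T ≠ 0 ∧ T.natDegree = n) ∧ t = 1)

/-!
The leading coefficients of the elements of `I` of degree `n`, together with `0`, form an ideal of
`D`, Mathlib's `I.leadingCoeffNth n`. The essential part at order `n` is a nonzero element of least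
norm in this ideal, so division with remainder shows that it divides every other element.
Multiplying by a power of `X` puts the leading coefficient of every element of `I` of degree at
most `n` into this ideal, in particular those of `A` and `B` when `n = deg A + deg B`.
-/

theorem dvd_of_mem_ideal_of_forall_not_r {D : Type*} [EuclideanDomain D] {J : Ideal D} {t : D}
    (ht : t ∈ J) (ht0 : t ≠ 0) (hmin : ∀ s ∈ J, s ≠ 0 → ¬ EuclideanDomain.r s t)
    {a : D} (ha : a ∈ J) : t ∣ a := by
  have hmod : a % t ∈ J := (mod_mem_iff ht).mpr ha
  by_contra hdvd
  exact hmin (a % t) hmod (mt EuclideanDomain.mod_eq_zero.mp hdvd) (EuclideanDomain.mod_lt a ht0)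

section LeadingCoeffNth

variable {R : Type*} [CommSemiring R] {I : Ideal R[X]} {n : ℕ}

theorem leadingCoeff_mem_leadingCoeffNth {P : R[X]} (hP : P ∈ I) (hn : P.natDegree ≤ n) :
    P.leadingCoeff ∈ I.leadingCoeffNth n :=
  (I.mem_leadingCoeffNth n _).mpr ⟨P, hP, natDegree_le_iff_degree_le.mp hn, rfl⟩

theorem exists_natDegree_eq_of_mem_leadingCoeffNth {s : R} (hs : s ∈ I.leadingCoeffNth n)
    (hs0 : s ≠ 0) : ∃ P ∈ I, P.natDegree = n ∧ P.leadingCoeff = s := by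
  obtain ⟨P, hP, hdeg, rfl⟩ := (I.mem_leadingCoeffNth n s).mp hs
  have hP0 : P ≠ 0 := leadingCoeff_ne_zero.mp hs0
  have : Nontrivial R := nontrivial_of_ne _ _ hs0
  refine ⟨P * X ^ (n - P.natDegree), I.mul_mem_right _ hP, ?_, leadingCoeff_mul_X_pow⟩
  rw [natDegree_mul_X_pow _ hP0]
  exact Nat.add_sub_cancel' (natDegree_le_iff_degree_le.mpr hdeg)

end LeadingCoeffNth

theorem IsEssentialPart.dvd_of_mem_leadingCoeffNth {D : Type*} [EuclideanDomain D]
    {I : Ideal D[X]} {n : ℕ} {t a : D} (ht : IsEssentialPart I n t)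
    (ha : a ∈ I.leadingCoeffNth n) : t ∣ a := by
  rcases ht with ⟨T, hT, hT0, hTn, rfl, hmin⟩ | ⟨-, rfl⟩
  · refine dvd_of_mem_ideal_of_forall_not_r (leadingCoeff_mem_leadingCoeffNth hT hTn.le)
      (leadingCoeff_ne_zero.mpr hT0) (fun s hs hs0 ↦ ?_) ha
    obtain ⟨L, hL, hLn, rfl⟩ := exists_natDegree_eq_of_mem_leadingCoeffNth hs hs0
    exact hmin L hL (leadingCoeff_ne_zero.mp hs0) hLn
  · exact one_dvd a

theorem stmt_9_general {D : Type*} [EuclideanDomain D] [GCDMonoid D] {I : Ideal D[X]} {A B : D[X]}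
    (hA : A ∈ I) (hB : B ∈ I) {n : ℕ} (hAn : A.natDegree ≤ n) (hBn : B.natDegree ≤ n) {t : D}
    (ht : IsEssentialPart I n t) : t ∣ gcd A.leadingCoeff B.leadingCoeff :=
  dvd_gcd (ht.dvd_of_mem_leadingCoeffNth (leadingCoeff_mem_leadingCoeffNth hA hAn))
    (ht.dvd_of_mem_leadingCoeffNth (leadingCoeff_mem_leadingCoeffNth hB hBn))

/-- Let `D` be a Euclidean domain with a normalized gcd, `A, B ∈ D[x]`
nonzero with `deg A ≥ deg B ≥ 1`, and let `t` be the essential part of the ideal `I`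
generated by `A` and `B` at order `deg A + deg B`.  Then `t ∣ gcd (lc A) (lc B)`. -/
theorem stmt_9 {D : Type*} [EuclideanDomain D] [NormalizedGCDMonoid D]
    (A B : Polynomial D) (hA : A ≠ 0) (hB : B ≠ 0)
    (hdeg : B.natDegree ≤ A.natDegree) (hB1 : 1 ≤ B.natDegree)
    (t : D)
    (ht : IsEssentialPart (Ideal.span ({A, B} : Set (Polynomial D)))
      (A.natDegree + B.natDegree) t) :
    t ∣ gcd A.leadingCoeff B.leadingCoeff :=
  stmt_9_general (Ideal.subset_span (by simp)) (Ideal.subset_span (by simp))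
    (Nat.le_add_right _ _) (Nat.le_add_left _ _) ht
end
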